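/- In the (j,m)-balanced redistricting game with m > 14j, the first player can force a tie: Player 1 has a strategy guaranteeing that at least j of the 2j bins are majority-white. -/

import Mathlib

/-- A move in the `(j,m)`-balanced redistricting game: a color
(`true` = white, `false` = black) together with one of the `2*j` bins. -/
abbrev Move (j : ℕ) := Bool × Fin (2*j)

/-- A strategy: given the history of moves (most recent first), produce a move. -/
abbrev Strat (j : ℕ) := List (Move j) → Move j

/-- The history after `n` moves when Player 1 (moving at even steps) plays `s1`
and Player 2 plays `s2`.  Most recent move first. -/
def hist (j : ℕ) (s1 s2 : Strat j) : ℕ → List (Move j)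
  | 0 => []
  | n+1 =>
      (if n % 2 = 0 then s1 (hist j s1 s2 n) else s2 (hist j s1 s2 n)) :: hist j s1 s2 n

/-- A move `mv` is legal after history `h`: a ball of that color remains
(there are `j*(2*m+1)` balls of each color) and the chosen bin is not full
(each bin has capacity `2*m+1`). -/
def legalMove (j m : ℕ) (h : List (Move j)) (mv : Move j) : Prop :=
  h.countP (fun x => x.1 == mv.1) < j * (2*m+1) ∧
  h.countP (fun x => x.2 == mv.2) < 2*m+1

/-- Player 1 always plays legally throughout the `2*j*(2*m+1)` moves. -/
def p1Legal (j m : ℕ) (s1 s2 : Strat j) : Prop :=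
  ∀ n < 2*j*(2*m+1), n % 2 = 0 →
    legalMove j m (hist j s1 s2 n) (s1 (hist j s1 s2 n))

/-- Player 2 always plays legally throughout the `2*j*(2*m+1)` moves. -/
def p2Legal (j m : ℕ) (s1 s2 : Strat j) : Prop :=
  ∀ n < 2*j*(2*m+1), n % 2 = 1 →
    legalMove j m (hist j s1 s2 n) (s2 (hist j s1 s2 n))

/-- Number of white balls in bin `b` according to history `h`. -/
def whitesIn (j : ℕ) (h : List (Move j)) (b : Fin (2*j)) : ℕ :=
  h.countP (fun x => x.1 == true && x.2 == b)

/-- Number of black balls in bin `b` according to history `h`. -/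
def blacksIn (j : ℕ) (h : List (Move j)) (b : Fin (2*j)) : ℕ :=
  h.countP (fun x => x.1 == false && x.2 == b)

/-- The final history: all `2*j*(2*m+1)` balls have been placed. -/
def finalHist (j m : ℕ) (s1 s2 : Strat j) : List (Move j) :=
  hist j s1 s2 (2*j*(2*m+1))

/-- Number of majority-white bins (at least `m+1` white balls). -/
def majWhiteCount (j m : ℕ) (h : List (Move j)) : ℕ :=
  (Finset.univ.filter (fun b : Fin (2*j) => m+1 ≤ whitesIn j h b)).card

/-- Number of majority-black bins (at least `m+1` black balls). -/
def majBlackCount (j m : ℕ) (h : List (Move j)) : ℕ :=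
  (Finset.univ.filter (fun b : Fin (2*j) => m+1 ≤ blacksIn j h b)).card

/-! ### Abstract positions: `w i`, `b i` are the numbers of white / black balls in bin `i`. -/

def qf (m w b : ℕ) : ℤ := if b < w then 2 * (min w (m+1) : ℕ) - w else -(w : ℤ)

def lf (w b : ℕ) : ℤ := if b < w then 1 else 0

def kf (w b : ℕ) : ℤ := if w < b then 1 else 0

theorem sum_change {n : ℕ} (g g' : Fin n → ℤ) (x : Fin n) (h : ∀ i, i ≠ x → g' i = g i) :
    ∑ i, g' i = ∑ i, g i + (g' x - g x) := by
  have h1 := Finset.add_sum_erase Finset.univ g (Finset.mem_univ x)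
  have h2 := Finset.add_sum_erase Finset.univ g' (Finset.mem_univ x)
  have h3 : ∑ i ∈ Finset.univ.erase x, g' i = ∑ i ∈ Finset.univ.erase x, g i :=
    Finset.sum_congr rfl (fun i hi => h i (Finset.ne_of_mem_erase hi))
  linarith

/-- Phase one, weak form. -/
structure PJ (j m : ℕ) (w b : Fin (2*j) → ℕ) : Prop where
  hz : ∀ i, w i = b i → w i = 0
  hK : ∑ i, kf (w i) (b i) + 1 ≤ ∑ i, lf (w i) (b i)
  hL : ∑ i, lf (w i) (b i) ≤ j
  hQ : ∑ i, lf (w i) (b i) ≤ ∑ i, qf m (w i) (b i)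
  hD : (j : ℤ) ≤ ∑ i, qf m (w i) (b i) ∨ ∀ i, w i ≤ m
  hB : ∑ i, (b i : ℤ) + 1 ≤ ∑ i, qf m (w i) (b i)

/-- Phase two. -/
def PI (j m : ℕ) (w b : Fin (2*j) → ℕ) : Prop :=
  ∃ A : Finset (Fin (2*j)), A.card = j ∧ (∀ i ∈ A, b i < w i) ∧
    ∑ i, w i + j ≤ ∑ i ∈ A, 2 * min (w i) (m+1)

def Won (j m : ℕ) (w : Fin (2*j) → ℕ) : Prop :=
  ∃ A : Finset (Fin (2*j)), A.card = j ∧ ∀ i ∈ A, m + 1 ≤ w i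

/-- The invariant at Player 2's turn. -/
def GInv (j m : ℕ) (w b : Fin (2*j) → ℕ) : Prop :=
  Won j m w ∨ PI j m w b ∨ (PJ j m w b ∧ ∑ i, lf (w i) (b i) < j)

theorem PJ.ginv {j m : ℕ} {w b : Fin (2*j) → ℕ} (h : PJ j m w b) : GInv j m w b := by
  rcases lt_or_eq_of_le h.hL with hl | hl
  · exact Or.inr (Or.inr ⟨h, hl⟩)
  · refine Or.inr (Or.inl ⟨Finset.univ.filter (fun i => b i < w i), ?_, ?_, ?_⟩)
    · have : ∑ i, lf (w i) (b i) = ((Finset.univ.filter (fun i => b i < w i)).card : ℤ) := by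
        simp [lf]
      omega
    · intro i hi
      simpa using hi
    · have h1 : ∑ i, qf m (w i) (b i) =
          ∑ i ∈ Finset.univ.filter (fun i => b i < w i), (2 * (min (w i) (m+1) : ℕ) : ℤ)
            - ∑ i, (w i : ℤ) := by
        rw [Finset.sum_filter, ← Finset.sum_sub_distrib]
        refine Finset.sum_congr rfl (fun i _ => ?_)
        unfold qf
        split_ifs <;> simp
      have h2 := h.hQ
      rw [hl, h1] at h2
      have h3 : ((∑ i, w i + j : ℕ) : ℤ) ≤
          ((∑ i ∈ Finset.univ.filter (fun i => b i < w i), 2 * min (w i) (m+1) : ℕ) : ℤ) := by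
        push_cast at h2 ⊢
        linarith
      exact_mod_cast h3

/-- If no bin is over-full in white, then a decided bin forces `Q ≥ j`. -/
theorem decided_aux {j m : ℕ} {w b : Fin (2*j) → ℕ} (hm : 2*j ≤ m)
    (hB : ∑ i, (b i : ℤ) + 1 ≤ ∑ i, qf m (w i) (b i))
    (hcap : ∀ i, w i + b i ≤ 2*m+1)
    (h : (j : ℤ) ≤ ∑ i, qf m (w i) (b i) ∨ ∀ i, w i ≤ m+1) :
    (j : ℤ) ≤ ∑ i, qf m (w i) (b i) ∨ ∀ i, w i ≤ m := by
  rcases h with h | h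
  · exact Or.inl h
  · by_cases h' : ∀ i, w i ≤ m
    · exact Or.inr h'
    · left
      push Not at h'
      obtain ⟨d, hd⟩ := h'
      have hq : ∀ i, 0 ≤ qf m (w i) (b i) + b i := by
        intro i
        have := h i
        unfold qf
        split_ifs <;> omega
      have h1 := Finset.single_le_sum (fun i _ => hq i) (Finset.mem_univ d)
      rw [Finset.sum_add_distrib] at h1
      have h2 : (m : ℤ) + 1 ≤ qf m (w d) (b d) + b d := by
        have := h d
        have := hcap d
        unfold qf
        split_ifs <;> omega
      have h3 : qf m (w d) (b d) + b d ≤ ∑ i, qf m (w i) (b i) + ∑ i, (b i : ℤ) := h1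
      omega

/-- `w' , b'` is obtained from `w, b` by one ball in bin `x`. -/
def Step {n : ℕ} (w b w' b' : Fin n → ℕ) (x : Fin n) : Prop :=
  (∀ i, i ≠ x → w' i = w i ∧ b' i = b i) ∧
  ((w' x = w x + 1 ∧ b' x = b x) ∨ (w' x = w x ∧ b' x = b x + 1))

theorem Step.sum {n : ℕ} {w b w' b' : Fin n → ℕ} {x : Fin n} (h : Step w b w' b' x)
    (f : ℕ → ℕ → ℤ) :
    ∑ i, f (w' i) (b' i) = ∑ i, f (w i) (b i) + (f (w' x) (b' x) - f (w x) (b x)) :=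
  sum_change (fun i => f (w i) (b i)) (fun i => f (w' i) (b' i)) x
    (fun i hi => by simp only [(h.1 i hi).1, (h.1 i hi).2])

theorem step_update {n : ℕ} (w b : Fin n → ℕ) (y : Fin n) :
    Step w b (Function.update w y (w y + 1)) b y := by
  refine ⟨fun i hi => ⟨by simp [hi], rfl⟩, Or.inl ⟨by simp, rfl⟩⟩

theorem finishJ {j m : ℕ} {w b w' b' : Fin (2*j) → ℕ} {x y : Fin (2*j)} (hm : 2*j ≤ m)
    (h : PJ j m w b) (hs : Step w b w' b' x) (hcap : ∀ i, w' i + b' i ≤ 2*m+1)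
    (hy : w' y ≤ m) (hcy : w' y + b' y < 2*m+1)
    {w'' : Fin (2*j) → ℕ} (hw : w'' = Function.update w' y (w' y + 1))
    (hz : ∀ i, w'' i = b' i → w'' i = 0)
    (hK : ∑ i, kf (w'' i) (b' i) + 1 ≤ ∑ i, lf (w'' i) (b' i))
    (hL : ∑ i, lf (w'' i) (b' i) ≤ j)
    (hmono : ∑ i, qf m (w i) (b i) ≤ ∑ i, qf m (w'' i) (b' i))
    (hQ : ∑ i, lf (w'' i) (b' i) ≤ ∑ i, qf m (w'' i) (b' i) ∨ ∃ d, m + 1 ≤ w'' d)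
    (hB : ∑ i, (b' i : ℤ) + 1 ≤ ∑ i, qf m (w'' i) (b' i)) :
    PJ j m w'' b' := by
  have hwy : w'' y = w' y + 1 := by simp [hw]
  have hwi : ∀ i, i ≠ y → w'' i = w' i := fun i hi => by simp [hw, hi]
  have hD : (j : ℤ) ≤ ∑ i, qf m (w'' i) (b' i) ∨ ∀ i, w'' i ≤ m := by
    refine decided_aux hm hB ?_ ?_
    · intro i
      by_cases hi : i = y
      · subst hi; omega
      · rw [hwi i hi]; exact hcap i
    · rcases h.hD with hd | hd
      · left; omega
      · right
        intro i
        by_cases hi : i = y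
        · subst hi; omega
        · rw [hwi i hi]
          by_cases hix : i = x
          · subst hix
            have := hd i
            rcases hs.2 with h2 | h2 <;> omega
          · rw [(hs.1 i hix).1]
            have := hd i
            omega
  refine ⟨hz, hK, hL, ?_, hD, hB⟩
  rcases hQ with hQ | ⟨d, hd⟩
  · exact hQ
  · rcases hD with h1 | h1
    · omega
    · have := h1 d
      omega

theorem dx_aux {m w b w' b' : ℕ} (hx2 : (w' = w + 1 ∧ b' = b) ∨ (w' = w ∧ b' = b + 1))
    (hA : ¬ w' = b') (hF : ¬ (w = 0 ∧ b = 0)) (hz : w = b → w = 0) :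
    lf w' b' = lf w b ∧ kf w' b' = kf w b ∧ -1 ≤ qf m w' b' - qf m w b ∧
      (b' : ℤ) - b ≤ qf m w' b' - qf m w b + 1 := by
  simp only [lf, kf, qf]
  refine ⟨?_, ?_, ?_, ?_⟩ <;> rcases hx2 with h2 | h2 <;> split_ifs <;> omega

theorem dy_aux {m w b : ℕ} (h1 : b < w) (h2 : w ≤ m) :
    lf (w+1) b = lf w b ∧ kf (w+1) b = kf w b ∧ qf m (w+1) b = qf m w b + 1 := by
  simp only [lf, kf, qf]
  refine ⟨?_, ?_, ?_⟩ <;> split_ifs <;> omega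

theorem dy_aux' {m w b : ℕ} (h1 : w = 0) (h2 : b = 0) :
    lf (w+1) b = lf w b + 1 ∧ kf (w+1) b = kf w b ∧ qf m (w+1) b = qf m w b + 1 := by
  simp only [lf, kf, qf]
  refine ⟨?_, ?_, ?_⟩ <;> split_ifs <;> omega

theorem roundJ {j m : ℕ} {w b w' b' : Fin (2*j) → ℕ} {x : Fin (2*j)} (hj : 0 < j) (hm : 2*j ≤ m)
    (h : PJ j m w b) (hl : ∑ i, lf (w i) (b i) < j)
    (hs : Step w b w' b' x) (hcap : ∀ i, w' i + b' i ≤ 2*m+1) :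
    ∃ y, ∑ i, w' i < j * (2*m+1) ∧ w' y + b' y < 2*m+1 ∧
      PJ j m (Function.update w' y (w' y + 1)) b' := by
  have e1 := hs.sum lf
  have e2 := hs.sum kf
  have e3 := hs.sum (qf m)
  have e4 := hs.sum (fun _ b => (b : ℤ))
  have e5 := hs.sum (fun w _ => (w : ℤ))
  have hQ := h.hQ
  have hK := h.hK
  have hB := h.hB
  have hzx := h.hz x
  have hcx := hcap x
  have hx2 := hs.2
  -- enough white balls
  have hW : ∑ i, w' i < j * (2*m+1) := by
    have a1 : ∑ i, (qf m (w i) (b i) + (w i : ℤ)) ≤ ∑ i, (2*(m+1) : ℤ) * lf (w i) (b i) := by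
      refine Finset.sum_le_sum (fun i _ => ?_)
      unfold qf lf
      split_ifs <;> omega
    rw [Finset.sum_add_distrib, ← Finset.mul_sum] at a1
    have a2 : (2*(m+1) : ℤ) * ∑ i, lf (w i) (b i) ≤ (2*(m+1) : ℤ) * (j - 1) := by
      apply mul_le_mul_of_nonneg_left
      · omega
      · positivity
    have a3 : 0 ≤ ∑ i, kf (w i) (b i) :=
      Finset.sum_nonneg (fun i _ => by unfold kf; split_ifs <;> omega)
    have a4 : ((∑ i, w' i : ℕ) : ℤ) < ((j * (2*m+1) : ℕ) : ℤ) := by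
      push_cast
      have a5 : (w' x : ℤ) ≤ w x + 1 := by rcases hx2 with h2 | h2 <;> omega
      have a6 : (2:ℤ) * j ≤ m := by exact_mod_cast hm
      have a7 : (0:ℤ) < j := by exact_mod_cast hj
      nlinarith
    exact_mod_cast a4
  -- facts on the second move
  have f1 := fun y => (step_update w' b' y).sum lf
  have f2 := fun y => (step_update w' b' y).sum kf
  have f3 := fun y => (step_update w' b' y).sum (qf m)
  simp only [Function.update_self] at f1 f2 f3
  have key : ∀ y, w' y ≤ m → w' y + b' y < 2*m+1 →
      (y = x ∨ (w' x ≠ b' x)) → (b' y ≤ w' y) →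
      (lf (w' x) (b' x) - lf (w x) (b x) + (lf (w' y + 1) (b' y) - lf (w' y) (b' y)) ≤ 1) →
      (kf (w' x) (b' x) - kf (w x) (b x) + (kf (w' y + 1) (b' y) - kf (w' y) (b' y))
        ≤ lf (w' x) (b' x) - lf (w x) (b x) + (lf (w' y + 1) (b' y) - lf (w' y) (b' y))) →
      ((lf (w' x) (b' x) - lf (w x) (b x) + (lf (w' y + 1) (b' y) - lf (w' y) (b' y))
        ≤ qf m (w' x) (b' x) - qf m (w x) (b x) + (qf m (w' y + 1) (b' y) - qf m (w' y) (b' y)))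
        ∨ ∃ d, d ≠ y ∧ m + 1 ≤ w' d) →
      ((b' x : ℤ) - b x
        ≤ qf m (w' x) (b' x) - qf m (w x) (b x) + (qf m (w' y + 1) (b' y) - qf m (w' y) (b' y))) →
      ∃ y, ∑ i, w' i < j * (2*m+1) ∧ w' y + b' y < 2*m+1 ∧
        PJ j m (Function.update w' y (w' y + 1)) b' := by
    intro y hy hcy hyx hby c1 c2 c3 c4
    refine ⟨y, hW, hcy, finishJ hm h hs hcap hy hcy rfl ?_ ?_ ?_ ?_ ?_ ?_⟩
    · intro i hi
      by_cases hiy : i = y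
      · subst hiy
        simp only [Function.update_self] at hi
        omega
      · simp only [Function.update_of_ne hiy] at hi ⊢
        by_cases hix : i = x
        · subst hix
          rcases hyx with hh | hh
          · exact absurd hh.symm hiy
          · exact absurd hi hh
        · rw [(hs.1 i hix).1, (hs.1 i hix).2] at hi
          rw [(hs.1 i hix).1]
          exact h.hz i hi
    · rw [f1, f2, e1, e2]; omega
    · rw [f1, e1]; omega
    · rw [f3, e3]; 
      rcases hx2 with h2 | h2 <;> omega
    · rcases c3 with c3 | ⟨d, hd, hd'⟩
      · left; rw [f1, f3, e1, e3]; omega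
      · right; exact ⟨d, by rw [Function.update_of_ne hd]; exact hd'⟩
    · rw [f3, e3]
      rw [e4]; omega
  -- a fresh bin different from `x`
  have fresh : ∃ y, y ≠ x ∧ w' y = 0 ∧ b' y = 0 := by
    by_contra hcon
    push Not at hcon
    have g0 : ∀ i, i ≠ x → (1 : ℤ) ≤ lf (w i) (b i) + kf (w i) (b i) := by
      intro i hi
      have h1 := hcon i hi
      rw [(hs.1 i hi).1, (hs.1 i hi).2] at h1
      have h2 := h.hz i
      unfold lf kf
      split_ifs <;> omega
    have g1 : ∑ i ∈ Finset.univ.erase x, (1 : ℤ) ≤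
        ∑ i ∈ Finset.univ.erase x, (lf (w i) (b i) + kf (w i) (b i)) :=
      Finset.sum_le_sum (fun i hi => g0 i (Finset.ne_of_mem_erase hi))
    have g2 : ∑ i ∈ Finset.univ.erase x, (lf (w i) (b i) + kf (w i) (b i)) ≤
        ∑ i, (lf (w i) (b i) + kf (w i) (b i)) :=
      Finset.sum_le_sum_of_subset_of_nonneg (Finset.erase_subset _ _)
        (fun i _ _ => by unfold lf kf; split_ifs <;> omega)
    rw [Finset.sum_add_distrib (s := Finset.univ)] at g2
    simp only [Finset.sum_const, Finset.card_erase_of_mem (Finset.mem_univ x), Finset.card_univ,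
      Fintype.card_fin, nsmul_eq_mul, mul_one] at g1
    omega
  by_cases hA : w' x = b' x
  · refine key x (by omega) (by omega) (Or.inl rfl) (by omega) ?_ ?_ (Or.inl ?_) ?_ <;>
    · clear key fresh f1 f2 f3 e1 e2 e3 e4 e5 hW
      simp only [lf, kf, qf]
      rcases hx2 with h2 | h2 <;> split_ifs <;> omega
  by_cases hF : w x = 0 ∧ b x = 0
  · rcases hx2 with h2 | h2
    · refine key x (by omega) (by omega) (Or.inl rfl) (by omega) ?_ ?_ (Or.inl ?_) ?_ <;>
      · clear key fresh f1 f2 f3 e1 e2 e3 e4 e5 hW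
        simp only [lf, kf, qf]
        split_ifs <;> omega
    · obtain ⟨y, hyx, hy1, hy2⟩ := fresh
      refine key y (by omega) (by omega) (Or.inr hA) (by omega) ?_ ?_ (Or.inl ?_) ?_ <;>
      · clear key f1 f2 f3 e1 e2 e3 e4 e5 hW
        simp only [lf, kf, qf, hy1, hy2]
        split_ifs <;> omega
  obtain ⟨d1, d2, d3, d4⟩ := dx_aux (m := m) hx2 hA hF hzx
  by_cases hU : ∃ y, b' y < w' y ∧ w' y ≤ m
  · obtain ⟨y, hy1, hy2⟩ := hU
    refine key y (by omega) (by omega) (Or.inr hA) (by omega) ?_ ?_ (Or.inl ?_) ?_ <;>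
    · obtain ⟨u1, u2, u3⟩ := dy_aux (m := m) hy1 hy2
      clear key fresh f1 f2 f3 e1 e2 e3 e4 e5 hW
      omega
  · push Not at hU
    obtain ⟨y, hyx, hy1, hy2⟩ := fresh
    have hd : ∃ d, d ≠ y ∧ m + 1 ≤ w' d := by
      have a3 : 0 ≤ ∑ i, kf (w i) (b i) :=
        Finset.sum_nonneg (fun i _ => by unfold kf; split_ifs <;> omega)
      have a4 : ∃ i, b i < w i := by
        by_contra hno
        push Not at hno
        have : ∑ i, lf (w i) (b i) = 0 :=
          Finset.sum_eq_zero (fun i _ => by have := hno i; unfold lf; split_ifs <;> omega)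
        omega
      obtain ⟨d, hd⟩ := a4
      have hd' : b' d < w' d := by
        by_cases hdx : d = x
        · subst hdx
          rcases hx2 with h2 | h2 <;> omega
        · rw [(hs.1 d hdx).1, (hs.1 d hdx).2]; exact hd
      refine ⟨d, ?_, hU d hd'⟩
      rintro rfl
      omega
    refine key y (by omega) (by omega) (Or.inr hA) (by omega) ?_ ?_ (Or.inr hd) ?_ <;>
    · obtain ⟨u1, u2, u3⟩ := dy_aux' (m := m) hy1 hy2
      clear key f1 f2 f3 e1 e2 e3 e4 e5 hW
      omega

theorem roundI {j m : ℕ} {w b w' b' : Fin (2*j) → ℕ} {x : Fin (2*j)}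
    (h : PI j m w b) (hs : Step w b w' b' x) (hcap : ∀ i, w' i + b' i ≤ 2*m+1)
    (hno : ¬ Won j m w') :
    ∃ y, ∑ i, w' i < j * (2*m+1) ∧ w' y + b' y < 2*m+1 ∧
      PI j m (Function.update w' y (w' y + 1)) b' := by
  obtain ⟨A, hA, hlead, hsum⟩ := h
  have hu : ∃ y ∈ A, w' y ≤ m := by
    by_contra hcon
    push Not at hcon
    exact hno ⟨A, hA, hcon⟩
  have hcx := hcap x
  have hmono : ∀ i, w i ≤ w' i := by
    intro i
    by_cases hi : i = x
    · subst hi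
      rcases hs.2 with h2 | h2 <;> omega
    · rw [(hs.1 i hi).1]
  -- the responding bin
  have hy : ∃ y ∈ A, w' y ≤ m ∧ b' y ≤ w' y ∧ ∀ i ∈ A, i ≠ y → b' i < w' i := by
    by_cases hxA : x ∈ A ∧ w' x ≤ b' x
    · obtain ⟨hxA, hx⟩ := hxA
      have h1 := hlead x hxA
      refine ⟨x, hxA, ?_, ?_, ?_⟩
      · rcases hs.2 with h2 | h2 <;> omega
      · rcases hs.2 with h2 | h2 <;> omega
      · intro i hi hix
        rw [(hs.1 i hix).1, (hs.1 i hix).2]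
        exact hlead i hi
    · have hall : ∀ i ∈ A, b' i < w' i := by
        intro i hi
        by_cases hix : i = x
        · subst hix
          by_contra hc
          exact hxA ⟨hi, by omega⟩
        · rw [(hs.1 i hix).1, (hs.1 i hix).2]
          exact hlead i hi
      obtain ⟨y, hyA, hy⟩ := hu
      exact ⟨y, hyA, hy, (hall y hyA).le, fun i hi _ => hall i hi⟩
  obtain ⟨y, hyA, hy, hby, hoth⟩ := hy
  have hP : ∑ i ∈ A, 2 * min (w i) (m+1) ≤ ∑ i ∈ A, 2 * min (w' i) (m+1) :=
    Finset.sum_le_sum (fun i _ => by have := hmono i; omega)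
  have hW : ∑ i, w' i ≤ ∑ i, w i + 1 := by
    have e5 := hs.sum (fun w _ => (w : ℤ))
    have a5 : (w' x : ℤ) ≤ w x + 1 := by rcases hs.2 with h2 | h2 <;> omega
    have : ((∑ i, w' i : ℕ) : ℤ) ≤ ((∑ i, w i + 1 : ℕ) : ℤ) := by
      push_cast
      linarith
    exact_mod_cast this
  have hsplit := Finset.add_sum_erase A (fun i => 2 * min (w' i) (m+1)) hyA
  have hcard : (A.erase y).card + 1 = j := by
    rw [Finset.card_erase_of_mem hyA]
    have : 0 < A.card := Finset.card_pos.mpr ⟨y, hyA⟩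
    omega
  have hbound : ∑ i ∈ A.erase y, 2 * min (w' i) (m+1) ≤ (A.erase y).card * (2 * (m+1)) := by
    have := Finset.sum_le_card_nsmul (A.erase y) (fun i => 2 * min (w' i) (m+1)) (2*(m+1))
      (fun i _ => by omega)
    simpa using this
  refine ⟨y, ?_, ?_, A, hA, ?_, ?_⟩
  · have : j * (2*m+1) + j = (A.erase y).card * (2*(m+1)) + 2*(m+1) := by
      have key : ∀ c n : ℕ, c + 1 = n → n * (2*m+1) + n = c * (2*(m+1)) + 2*(m+1) := by
        rintro c n rfl; ring
      exact key _ _ hcard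
    omega
  · omega
  · intro i hi
    by_cases hiy : i = y
    · subst hiy
      simp only [Function.update_self]
      omega
    · simp only [Function.update_of_ne hiy]
      exact hoth i hi hiy
  · have h1 := Finset.add_sum_erase A
      (fun i => 2 * min (Function.update w' y (w' y + 1) i) (m+1)) hyA
    have h2 : ∑ i ∈ A.erase y, 2 * min (Function.update w' y (w' y + 1) i) (m+1) =
        ∑ i ∈ A.erase y, 2 * min (w' i) (m+1) :=
      Finset.sum_congr rfl (fun i hi => by
        rw [Function.update_of_ne (Finset.ne_of_mem_erase hi)])
    have h3 : ∑ i, Function.update w' y (w' y + 1) i = ∑ i, w' i + 1 := by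
      have h4 := (step_update w' b' y).sum (fun w _ => (w : ℤ))
      simp only [Function.update_self] at h4
      have : ((∑ i, Function.update w' y (w' y + 1) i : ℕ) : ℤ) = ((∑ i, w' i + 1 : ℕ) : ℤ) := by
        push_cast at h4 ⊢
        linarith
      exact_mod_cast this
    simp only [Function.update_self] at h1
    rw [h3, ← h1, h2]
    omega

/-- One full round. -/
theorem fullRound {j m : ℕ} {w b w' b' : Fin (2*j) → ℕ} {x : Fin (2*j)} (hj : 0 < j) (hm : 2*j ≤ m)
    (h : GInv j m w b) (hs : Step w b w' b' x) (hcap : ∀ i, w' i + b' i ≤ 2*m+1) :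
    Won j m w' ∨ ∃ y, ∑ i, w' i < j * (2*m+1) ∧ w' y + b' y < 2*m+1 ∧
      GInv j m (Function.update w' y (w' y + 1)) b' := by
  by_cases hno : Won j m w'
  · exact Or.inl hno
  right
  rcases h with ⟨A, hA, hw⟩ | h | ⟨h, hl⟩
  · refine absurd ⟨A, hA, fun i hi => (hw i hi).trans ?_⟩ hno
    by_cases hi : i = x
    · subst hi
      rcases hs.2 with h2 | h2 <;> omega
    · rw [(hs.1 i hi).1]
  · obtain ⟨y, h1, h2, h3⟩ := roundI h hs hcap hno
    exact ⟨y, h1, h2, Or.inr (Or.inl h3)⟩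
  · obtain ⟨y, h1, h2, h3⟩ := roundJ hj hm h hl hs hcap
    exact ⟨y, h1, h2, h3.ginv⟩

theorem start {j m : ℕ} (hj : 0 < j) (hm : 2*j ≤ m) (y : Fin (2*j)) :
    GInv j m (Function.update (fun _ => 0) y 1) (fun _ => 0) := by
  have f : ∀ g : ℕ → ℕ → ℤ, ∑ i, g ((Function.update (fun _ => 0) y 1 : Fin (2*j) → ℕ) i) 0 =
      ∑ i : Fin (2*j), g 0 0 + (g 1 0 - g 0 0) := by
    intro g
    have := (step_update (fun _ : Fin (2*j) => 0) (fun _ => 0) y).sum g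
    simpa using this
  apply PJ.ginv
  refine ⟨?_, ?_, ?_, ?_, ?_, ?_⟩
  · intro i hi
    exact hi
  · rw [f kf, f lf]; simp [kf, lf]
  · rw [f lf]; simp [lf]; omega
  · rw [f lf, f (qf m)]; simp [lf, qf]
  · right
    intro i
    by_cases hi : i = y
    · subst hi; simp; omega
    · simp [hi]
  · rw [f (qf m)]; simp [qf]

/-! ### Histories -/

theorem whites_cons (j : ℕ) (h : List (Move j)) (c : Bool) (x i : Fin (2*j)) :
    whitesIn j ((c, x) :: h) i = whitesIn j h i + if c = true ∧ x = i then 1 else 0 := by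
  simp [whitesIn, List.countP_cons]

theorem blacks_cons (j : ℕ) (h : List (Move j)) (c : Bool) (x i : Fin (2*j)) :
    blacksIn j ((c, x) :: h) i = blacksIn j h i + if c = false ∧ x = i then 1 else 0 := by
  simp [blacksIn, List.countP_cons]

theorem bin_count (j : ℕ) (h : List (Move j)) (i : Fin (2*j)) :
    h.countP (fun x => x.2 == i) = whitesIn j h i + blacksIn j h i := by
  induction h with
  | nil => simp [whitesIn, blacksIn]
  | cons a h ih =>
    obtain ⟨c, x⟩ := a
    rw [whites_cons, blacks_cons, List.countP_cons, ih]
    cases c <;> by_cases hx : x = i <;> simp [hx] <;> omega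

theorem white_count (j : ℕ) (h : List (Move j)) :
    h.countP (fun x => x.1 == true) = ∑ i, whitesIn j h i := by
  induction h with
  | nil => simp [whitesIn]
  | cons a h ih =>
    obtain ⟨c, x⟩ := a
    rw [List.countP_cons, ih]
    simp only [whites_cons, Finset.sum_add_distrib]
    cases c <;> simp

theorem black_count (j : ℕ) (h : List (Move j)) :
    h.countP (fun x => x.1 == false) = ∑ i, blacksIn j h i := by
  induction h with
  | nil => simp [blacksIn]
  | cons a h ih =>
    obtain ⟨c, x⟩ := a
    rw [List.countP_cons, ih]
    simp only [blacks_cons, Finset.sum_add_distrib]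
    cases c <;> simp

theorem length_count (j : ℕ) (h : List (Move j)) :
    h.length = ∑ i, whitesIn j h i + ∑ i, blacksIn j h i := by
  rw [← white_count, ← black_count]
  induction h with
  | nil => simp
  | cons a h ih =>
    obtain ⟨c, x⟩ := a
    rw [List.countP_cons, List.countP_cons, List.length_cons, ih]
    cases c <;> simp <;> omega

theorem step_cons (j : ℕ) (h : List (Move j)) (mv : Move j) :
    Step (whitesIn j h) (blacksIn j h) (whitesIn j (mv :: h)) (blacksIn j (mv :: h)) mv.2 := by
  obtain ⟨c, x⟩ := mv
  refine ⟨fun i hi => ?_, ?_⟩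
  · rw [whites_cons, blacks_cons]
    simp [Ne.symm hi]
  · rw [whites_cons, blacks_cons]
    cases c <;> simp

theorem white_update (j : ℕ) (h : List (Move j)) (y : Fin (2*j)) :
    whitesIn j ((true, y) :: h) = Function.update (whitesIn j h) y (whitesIn j h y + 1) ∧
    blacksIn j ((true, y) :: h) = blacksIn j h := by
  constructor
  · funext i
    rw [whites_cons]
    by_cases hi : i = y
    · subst hi; simp
    · simp [hi, Ne.symm hi]
  · funext i
    rw [blacks_cons]
    simp

/-- Position reached by legal moves. -/
def LegPos (j m : ℕ) (h : List (Move j)) : Prop :=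
  (∀ i, whitesIn j h i + blacksIn j h i ≤ 2*m+1) ∧
  ∑ i, whitesIn j h i ≤ j * (2*m+1) ∧ ∑ i, blacksIn j h i ≤ j * (2*m+1)

theorem LegPos.cons {j m : ℕ} {h : List (Move j)} (hl : LegPos j m h) {mv : Move j}
    (hmv : legalMove j m h mv) : LegPos j m (mv :: h) := by
  obtain ⟨h1, h2, h3⟩ := hl
  obtain ⟨c, x⟩ := mv
  obtain ⟨g1, g2⟩ := hmv
  refine ⟨fun i => ?_, ?_, ?_⟩
  · rw [← bin_count, List.countP_cons, bin_count]
    by_cases hx : x = i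
    · subst hx
      rw [bin_count] at g2
      simp; simpa using g2
    · simpa [hx] using h1 i
  · rw [← white_count, List.countP_cons, white_count]
    cases c
    · simpa using h2
    · simp only [white_count] at g1
      simp; omega
  · rw [← black_count, List.countP_cons, black_count]
    cases c
    · simp only [black_count] at g1
      simp; omega
    · simpa using h3

def Good (j m : ℕ) (h : List (Move j)) (mv : Move j) : Prop :=
  legalMove j m h mv ∧ GInv j m (whitesIn j (mv :: h)) (blacksIn j (mv :: h))

theorem good_white {j m : ℕ} {h : List (Move j)} {y : Fin (2*j)}
    (h1 : ∑ i, whitesIn j h i < j * (2*m+1)) (h2 : whitesIn j h y + blacksIn j h y < 2*m+1)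
    (h3 : GInv j m (Function.update (whitesIn j h) y (whitesIn j h y + 1)) (blacksIn j h)) :
    Good j m h (true, y) := by
  refine ⟨⟨?_, ?_⟩, ?_⟩
  · rw [white_count]; exact h1
  · rw [bin_count]; exact h2
  · rw [(white_update j h y).1, (white_update j h y).2]; exact h3

theorem exists_legal {j m : ℕ} {h : List (Move j)} (hlen : h.length < 2*j*(2*m+1)) :
    ∃ mv, legalMove j m h mv := by
  have hc : ∃ c : Bool, h.countP (fun x => x.1 == c) < j * (2*m+1) := by
    by_contra hcon
    push Not at hcon
    have h1 := hcon true
    have h2 := hcon false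
    rw [white_count] at h1
    rw [black_count] at h2
    have := length_count j h
    have e : 2*j*(2*m+1) = j*(2*m+1) + j*(2*m+1) := by ring
    omega
  have hb : ∃ y : Fin (2*j), h.countP (fun x => x.2 == y) < 2*m+1 := by
    by_contra hcon
    push Not at hcon
    have h1 : ∑ i : Fin (2*j), (2*m+1) ≤ ∑ i, (whitesIn j h i + blacksIn j h i) :=
      Finset.sum_le_sum (fun i _ => by rw [← bin_count]; exact hcon i)
    have h2 : ∑ i, (whitesIn j h i + blacksIn j h i) = h.length := by
      rw [Finset.sum_add_distrib, ← length_count]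
    rw [h2, Finset.sum_const, Finset.card_univ, Fintype.card_fin, smul_eq_mul] at h1
    omega
  obtain ⟨c, hc⟩ := hc
  obtain ⟨y, hy⟩ := hb
  exact ⟨(c, y), hc, hy⟩

theorem won_cons {j m : ℕ} {h : List (Move j)} (hw : Won j m (whitesIn j h)) (mv : Move j) :
    Won j m (whitesIn j (mv :: h)) := by
  obtain ⟨A, hA, hw⟩ := hw
  refine ⟨A, hA, fun i hi => (hw i hi).trans ?_⟩
  obtain ⟨c, x⟩ := mv
  rw [whites_cons]
  omega

theorem hist_length (j : ℕ) (s1 s2 : Strat j) (n : ℕ) : (hist j s1 s2 n).length = n := by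
  induction n with
  | zero => rfl
  | succ n ih => simp [hist, ih]

open Classical in
noncomputable def theStrat (j m : ℕ) (hj : 0 < j) : Strat j := fun h =>
  if hex : ∃ mv, Good j m h mv then hex.choose else (true, ⟨0, by omega⟩)

theorem theStrat_good {j m : ℕ} (hj : 0 < j) {h : List (Move j)} (hex : ∃ mv, Good j m h mv) :
    Good j m h (theStrat j m hj h) := by
  unfold theStrat
  rw [dif_pos hex]
  exact hex.choose_spec

theorem main_inv {j m : ℕ} (hj : 0 < j) (hm : 2*j ≤ m) (s2 : Strat j)
    (hp2 : p2Legal j m (theStrat j m hj) s2) :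
    ∀ n ≤ 2*j*(2*m+1), LegPos j m (hist j (theStrat j m hj) s2 n) ∧
      (n % 2 = 1 → GInv j m (whitesIn j (hist j (theStrat j m hj) s2 n))
        (blacksIn j (hist j (theStrat j m hj) s2 n))) ∧
      (n % 2 = 0 → n < 2*j*(2*m+1) → Good j m (hist j (theStrat j m hj) s2 n)
        (theStrat j m hj (hist j (theStrat j m hj) s2 n))) ∧
      (n = 2*j*(2*m+1) → Won j m (whitesIn j (hist j (theStrat j m hj) s2 n))) := by
  intro n
  induction n with
  | zero =>
    intro _
    refine ⟨⟨?_, ?_, ?_⟩, ?_, ?_, ?_⟩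
    · intro i; simp [hist, whitesIn, blacksIn]
    · simp [hist, whitesIn]
    · simp [hist, blacksIn]
    · intro h0; omega
    · intro _ _
      apply theStrat_good
      refine ⟨(true, ⟨0, by omega⟩), good_white ?_ ?_ ?_⟩
      · simp only [hist, whitesIn, List.countP_nil, Finset.sum_const_zero]
        positivity
      · simp [hist, whitesIn, blacksIn]
      · exact start hj hm _
    · intro h0
      have : 0 < 2*j*(2*m+1) := by positivity
      omega
  | succ n ih =>
    intro hn
    obtain ⟨i1, i2, i3, _⟩ := ih (by omega)
    have heven : 2*j*(2*m+1) = 2*(j*(2*m+1)) := by ring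
    rcases Nat.mod_two_eq_zero_or_one n with h0 | h1
    · have hh : hist j (theStrat j m hj) s2 (n+1) =
          theStrat j m hj (hist j (theStrat j m hj) s2 n) :: hist j (theStrat j m hj) s2 n := by
        simp [hist, h0]
      have hg := i3 h0 (by omega)
      rw [hh]
      refine ⟨i1.cons hg.1, fun _ => hg.2, fun h => by omega, fun h => by omega⟩
    · have hh : hist j (theStrat j m hj) s2 (n+1) =
          s2 (hist j (theStrat j m hj) s2 n) :: hist j (theStrat j m hj) s2 n := by
        simp [hist, h1]
      have hleg := hp2 n (by omega) h1
      have hlen := hist_length j (theStrat j m hj) s2 (n+1)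
      rw [hh] at hlen ⊢
      have hpos := i1.cons hleg
      have hr := fullRound hj hm (i2 h1) (step_cons j _ _) hpos.1
      refine ⟨hpos, fun h => by omega, fun _ hlt => ?_, fun hfull => ?_⟩
      · apply theStrat_good
        rcases hr with hw | ⟨y, y1, y2, y3⟩
        · obtain ⟨mv, hmv⟩ := exists_legal (j := j) (m := m) (by rw [hlen]; exact hlt)
          exact ⟨mv, hmv, Or.inl (won_cons hw mv)⟩
        · exact ⟨_, good_white y1 y2 y3⟩
      · rcases hr with hw | ⟨y, y1, y2, y3⟩
        · exact hw
        · exfalso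
          rw [length_count] at hlen
          have := hpos.2.2
          omega

/-- In the `(j,m)`-balanced redistricting game with `m > 14*j`,
Player 1 can force a tie: Player 1 has a strategy such that against any legally
playing Player 2, Player 1's moves are all legal and at least `j` of the `2*j`
bins end up majority-white. -/
theorem player1_forces_tie (j m : ℕ) (hj : 0 < j) (hm : 14*j < m) :
    ∃ s1 : Strat j, ∀ s2 : Strat j,
      p2Legal j m s1 s2 →
      p1Legal j m s1 s2 ∧
      j ≤ majWhiteCount j m (finalHist j m s1 s2) := by
  refine ⟨theStrat j m hj, fun s2 hp2 => ⟨fun n hn h0 => ?_, ?_⟩⟩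
  · exact ((main_inv hj (by omega) s2 hp2 n hn.le).2.2.1 h0 hn).1
  · obtain ⟨A, hA, hw⟩ := (main_inv hj (by omega) s2 hp2 _ le_rfl).2.2.2 rfl
    refine hA.symm.le.trans (Finset.card_le_card (fun i hi => ?_))
    simpa [finalHist] using hw i hi
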